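/- (Eulerian intercommunication) If (A,v,v) ∈ ℛ, then (A,v,v) ↔ (A,u,u) for every pair of vertices u, v ∈ V. -/

import Mathlib

attribute [local instance] Classical.propDecidable

namespace FPL

/-- Vertices of the brick-wall honeycomb lattice with periodic boundary conditions. -/
abbrev Vtx (m n : ℕ) := ZMod m × ZMod n

/-- Adjacency on the brick-wall honeycomb lattice: horizontal edges between `(i,j)` and
`(i+1,j)`, and vertical edges between `(i,j)` and `(i,j+1)` whenever `i+j` is even. -/
def HoneyAdj (m n : ℕ) (x y : Vtx m n) : Prop :=
  (x.2 = y.2 ∧ (y.1 = x.1 + 1 ∨ x.1 = y.1 + 1)) ∨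
  (x.1 = y.1 ∧ ((y.2 = x.2 + 1 ∧ Even (x.1.val + x.2.val)) ∨
                (x.2 = y.2 + 1 ∧ Even (y.1.val + y.2.val))))

variable (m n : ℕ) [NeZero m] [NeZero n]

/-- The edge set of the brick-wall honeycomb lattice. -/
noncomputable def honeyEdges : Finset (Sym2 (Vtx m n)) :=
  Finset.image (fun p : Vtx m n × Vtx m n => s(p.1, p.2))
    (Finset.univ.filter fun p => HoneyAdj m n p.1 p.2)

/-- `bdeg m n A x` is the degree of the vertex `x` in the spanning subgraph `(V, A)`. -/
noncomputable def bdeg (A : Finset (Sym2 (Vtx m n))) (x : Vtx m n) : ℕ :=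
  (A.filter fun e => x ∈ e).card

/-- `(A,u,v)` is a state of the worm chain: `A ⊆ E`, and the set of odd-degree vertices of
`(V,A)` is `{u,v}` if `u ≠ v`, and is empty if `u = v`. -/
def IsWormState (A : Finset (Sym2 (Vtx m n))) (u v : Vtx m n) : Prop :=
  A ⊆ honeyEdges m n ∧ ∀ x, (Odd (bdeg m n A x) ↔ ((x = u ∨ x = v) ∧ u ≠ v))

/-- The worm state space `𝒮`. -/
abbrev WormState := {p : Finset (Sym2 (Vtx m n)) × Vtx m n × Vtx m n //
  IsWormState m n p.1 p.2.1 p.2.2}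

/-- The set `ℛ` of states with no isolated vertices. -/
def FullSupport (st : WormState m n) : Prop := ∀ x : Vtx m n, bdeg m n st.1.1 x ≠ 0

/-- The fully-packed worm transition matrix `P'_∞`. -/
noncomputable def Pinf : Matrix (WormState m n) (WormState m n) ℝ := fun st tt =>
  if st.1.2.1 = st.1.2.2 then
    (if tt = st then (bdeg m n st.1.1 st.1.2.2 : ℝ) / 3 else 0) +
    (if ∃ v' : Vtx m n, HoneyAdj m n st.1.2.2 v' ∧ s(st.1.2.2, v') ∉ st.1.1 ∧
        tt.1.1 = insert s(st.1.2.2, v') st.1.1 ∧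
        ((tt.1.2.1 = v' ∧ tt.1.2.2 = st.1.2.2) ∨ (tt.1.2.1 = st.1.2.2 ∧ tt.1.2.2 = v'))
      then 1/6 else 0)
  else
    (if bdeg m n st.1.1 st.1.2.1 = 3 ∧ ∃ u' : Vtx m n, HoneyAdj m n st.1.2.1 u' ∧
        s(st.1.2.1, u') ∈ st.1.1 ∧ tt.1.1 = st.1.1.erase s(st.1.2.1, u') ∧
        tt.1.2.1 = u' ∧ tt.1.2.2 = st.1.2.2 then 1/6 else 0) +
    (if bdeg m n st.1.1 st.1.2.1 = 1 ∧ ∃ u' : Vtx m n, HoneyAdj m n st.1.2.1 u' ∧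
        s(st.1.2.1, u') ∉ st.1.1 ∧ tt.1.1 = insert s(st.1.2.1, u') st.1.1 ∧
        tt.1.2.1 = u' ∧ tt.1.2.2 = st.1.2.2 then 1/4 else 0) +
    (if bdeg m n st.1.1 st.1.2.2 = 3 ∧ ∃ v' : Vtx m n, HoneyAdj m n st.1.2.2 v' ∧
        s(st.1.2.2, v') ∈ st.1.1 ∧ tt.1.1 = st.1.1.erase s(st.1.2.2, v') ∧
        tt.1.2.1 = st.1.2.1 ∧ tt.1.2.2 = v' then 1/6 else 0) +
    (if bdeg m n st.1.1 st.1.2.2 = 1 ∧ ∃ v' : Vtx m n, HoneyAdj m n st.1.2.2 v' ∧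
        s(st.1.2.2, v') ∉ st.1.1 ∧ tt.1.1 = insert s(st.1.2.2, v') st.1.1 ∧
        tt.1.2.1 = st.1.2.1 ∧ tt.1.2.2 = v' then 1/4 else 0)

/-- `st → tt`: some power of `P'_∞` has positive `(st,tt)` entry. -/
def Reaches (st tt : WormState m n) : Prop := ∃ k : ℕ, 0 < (Pinf m n ^ k) st tt

/-- `st ↔ tt`: mutual reachability. -/
def Comm (st tt : WormState m n) : Prop := Reaches m n st tt ∧ Reaches m n tt st

/-- The fully-packed configuration consisting of all horizontal edges. -/
noncomputable def Hconfig : Finset (Sym2 (Vtx m n)) :=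
  Finset.image (fun p : Vtx m n => s(p, (p.1 + 1, p.2))) Finset.univ

section helpers

variable {m n}

theorem bdeg_insert (A : Finset (Sym2 (Vtx m n))) (a b x : Vtx m n) (h : s(a, b) ∉ A) :
    bdeg m n (insert s(a, b) A) x = bdeg m n A x + if x = a ∨ x = b then 1 else 0 := by
  unfold bdeg
  rw [Finset.filter_insert]
  by_cases hx : x = a ∨ x = b
  · rw [if_pos (by simpa using hx), if_pos hx, Finset.card_insert_of_notMem]
    simp [h]
  · rw [if_neg (by simpa using hx), if_neg hx]; rfl

theorem bdeg_erase (A : Finset (Sym2 (Vtx m n))) (a b x : Vtx m n) (h : s(a, b) ∈ A) :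
    bdeg m n A x = bdeg m n (A.erase s(a, b)) x + if x = a ∨ x = b then 1 else 0 := by
  have := bdeg_insert (A.erase s(a, b)) a b x (by simp)
  rwa [Finset.insert_erase h] at this

theorem worm_insert {A : Finset (Sym2 (Vtx m n))} {u v u' : Vtx m n}
    (h : IsWormState m n A u v) (hadj : HoneyAdj m n u u') (hne : u ≠ u') (hA : s(u, u') ∉ A) :
    IsWormState m n (insert s(u, u') A) u' v := by
  refine ⟨?_, fun x => ?_⟩
  · intro e he
    rcases Finset.mem_insert.1 he with rfl | he
    · exact Finset.mem_image.2 ⟨(u, u'), by simp [hadj], rfl⟩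
    · exact h.1 he
  · have h2 := h.2 x
    rw [bdeg_insert _ _ _ _ hA]
    by_cases hx : x = u ∨ x = u'
    · rw [if_pos hx, Nat.odd_add_one, h2]
      grind
    · rw [if_neg hx, Nat.add_zero, h2]
      grind

theorem worm_erase {A : Finset (Sym2 (Vtx m n))} {u v u' : Vtx m n}
    (h : IsWormState m n A u v) (hne : u ≠ u') (hA : s(u, u') ∈ A) :
    IsWormState m n (A.erase s(u, u')) u' v := by
  refine ⟨fun e he => h.1 (Finset.mem_of_mem_erase he), fun x => ?_⟩
  have h2 := h.2 x
  rw [bdeg_erase _ _ _ x hA] at h2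
  by_cases hx : x = u ∨ x = u'
  · rw [if_pos hx, Nat.odd_add_one] at h2
    grind
  · rw [if_neg hx, Nat.add_zero] at h2
    grind

theorem worm_symm {A : Finset (Sym2 (Vtx m n))} {u v : Vtx m n}
    (h : IsWormState m n A u v) : IsWormState m n A v u :=
  ⟨h.1, fun x => by rw [h.2 x]; grind⟩

theorem Pinf_nonneg (s t : WormState m n) : 0 ≤ Pinf m n s t := by
  unfold Pinf
  split_ifs <;> positivity

theorem pow_nonneg' (k : ℕ) (s t : WormState m n) : 0 ≤ (Pinf m n ^ k) s t := by
  induction k generalizing t with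
  | zero => rw [pow_zero, Matrix.one_apply]; split_ifs <;> norm_num
  | succ k ih =>
    rw [pow_succ, Matrix.mul_apply]
    exact Finset.sum_nonneg fun r _ => mul_nonneg (ih r) (Pinf_nonneg r t)

theorem reaches_refl (s : WormState m n) : Reaches m n s s :=
  ⟨0, by rw [pow_zero, Matrix.one_apply_eq]; norm_num⟩

theorem reaches_trans {s t r : WormState m n} (h1 : Reaches m n s t) (h2 : Reaches m n t r) :
    Reaches m n s r := by
  obtain ⟨k, hk⟩ := h1
  obtain ⟨l, hl⟩ := h2
  refine ⟨k + l, ?_⟩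
  rw [pow_add, Matrix.mul_apply]
  exact Finset.sum_pos' (fun r _ => mul_nonneg (pow_nonneg' _ _ _) (pow_nonneg' _ _ _))
    ⟨t, Finset.mem_univ _, mul_pos hk hl⟩

theorem reaches_step {s t : WormState m n} (h : 0 < Pinf m n s t) : Reaches m n s t :=
  ⟨1, by rwa [pow_one]⟩

/-- Reachability on raw triples. -/
def RR (p q : Finset (Sym2 (Vtx m n)) × Vtx m n × Vtx m n) : Prop :=
  ∃ (hp : IsWormState m n p.1 p.2.1 p.2.2) (hq : IsWormState m n q.1 q.2.1 q.2.2),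
    Reaches m n ⟨p, hp⟩ ⟨q, hq⟩

theorem RR.trans {p q r : Finset (Sym2 (Vtx m n)) × Vtx m n × Vtx m n}
    (h1 : RR p q) (h2 : RR q r) : RR p r := by
  obtain ⟨hp, hq, h⟩ := h1
  obtain ⟨hq', hr, h'⟩ := h2
  exact ⟨hp, hr, reaches_trans h h'⟩

theorem step_start {A : Finset (Sym2 (Vtx m n))} {v v' : Vtx m n}
    (h : IsWormState m n A v v) (hadj : HoneyAdj m n v v') (hne : v ≠ v') (hA : s(v, v') ∉ A) :
    RR (A, v, v) (insert s(v, v') A, v', v) := by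
  refine ⟨h, worm_insert h hadj hne hA, reaches_step ?_⟩
  unfold Pinf
  rw [if_pos rfl]
  refine add_pos_of_nonneg_of_pos (by split_ifs <;> positivity) ?_
  rw [if_pos ⟨v', hadj, hA, rfl, Or.inl ⟨rfl, rfl⟩⟩]
  norm_num

theorem step_del_left {A : Finset (Sym2 (Vtx m n))} {u v u' : Vtx m n}
    (h : IsWormState m n A u v) (huv : u ≠ v) (hd : bdeg m n A u = 3)
    (hadj : HoneyAdj m n u u') (hne : u ≠ u') (hA : s(u, u') ∈ A) :
    RR (A, u, v) (A.erase s(u, u'), u', v) := by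
  refine ⟨h, worm_erase h hne hA, reaches_step ?_⟩
  unfold Pinf
  rw [if_neg huv]
  rw [if_pos ⟨hd, u', hadj, hA, rfl, rfl, rfl⟩]
  split_ifs <;> positivity

theorem step_add_left {A : Finset (Sym2 (Vtx m n))} {u v u' : Vtx m n}
    (h : IsWormState m n A u v) (huv : u ≠ v) (hd : bdeg m n A u = 1)
    (hadj : HoneyAdj m n u u') (hne : u ≠ u') (hA : s(u, u') ∉ A) :
    RR (A, u, v) (insert s(u, u') A, u', v) := by
  refine ⟨h, worm_insert h hadj hne hA, reaches_step ?_⟩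
  unfold Pinf
  rw [if_neg huv]
  rw [if_pos (c := bdeg m n A u = 1 ∧ _) ⟨hd, u', hadj, hA, rfl, rfl, rfl⟩]
  split_ifs <;> positivity

theorem step_del_right {A : Finset (Sym2 (Vtx m n))} {u v v' : Vtx m n}
    (h : IsWormState m n A u v) (huv : u ≠ v) (hd : bdeg m n A v = 3)
    (hadj : HoneyAdj m n v v') (hne : v ≠ v') (hA : s(v, v') ∈ A) :
    RR (A, u, v) (A.erase s(v, v'), u, v') := by
  refine ⟨h, worm_symm (worm_erase (worm_symm h) hne hA), reaches_step ?_⟩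
  unfold Pinf
  rw [if_neg huv]
  rw [if_pos (c := bdeg m n A v = 3 ∧ ∃ v'' : Vtx m n, HoneyAdj m n v v'' ∧
        s(v, v'') ∈ A ∧ A.erase s(v, v') = A.erase s(v, v'') ∧
        u = u ∧ v' = v'') ⟨hd, v', hadj, hA, rfl, rfl, rfl⟩]
  split_ifs <;> positivity

theorem step_add_right {A : Finset (Sym2 (Vtx m n))} {u v v' : Vtx m n}
    (h : IsWormState m n A u v) (huv : u ≠ v) (hd : bdeg m n A v = 1)
    (hadj : HoneyAdj m n v v') (hne : v ≠ v') (hA : s(v, v') ∉ A) :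
    RR (A, u, v) (insert s(v, v') A, u, v') := by
  refine ⟨h, worm_symm (worm_insert (worm_symm h) hadj hne hA), reaches_step ?_⟩
  unfold Pinf
  rw [if_neg huv]
  rw [if_pos (c := bdeg m n A v = 1 ∧ ∃ v'' : Vtx m n, HoneyAdj m n v v'' ∧
        s(v, v'') ∉ A ∧ insert s(v, v') A = insert s(v, v'') A ∧
        u = u ∧ v' = v'') ⟨hd, v', hadj, hA, rfl, rfl, rfl⟩]
  split_ifs <;> positivity

theorem adj_symm {x y : Vtx m n} (h : HoneyAdj m n x y) : HoneyAdj m n y x := by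
  unfold HoneyAdj at *
  rcases h with ⟨h, h1 | h1⟩ | ⟨h, h1 | h1⟩
  · exact Or.inl ⟨h.symm, Or.inr h1⟩
  · exact Or.inl ⟨h.symm, Or.inl h1⟩
  · exact Or.inr ⟨h.symm, Or.inr h1⟩
  · exact Or.inr ⟨h.symm, Or.inl h1⟩

theorem one_ne (k : ℕ) (hk : 4 ≤ k) : (1 : ZMod k) ≠ 0 := by
  have : Fact (1 < k) := ⟨by omega⟩
  exact one_ne_zero

theorem two_ne (k : ℕ) (hk : 4 ≤ k) : (2 : ZMod k) ≠ 0 := by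
  intro h
  have : ((2 : ℕ) : ZMod k) = 0 := by exact_mod_cast h
  rw [ZMod.natCast_eq_zero_iff] at this
  have := Nat.le_of_dvd (by norm_num) this
  omega

theorem val_parity (k : ℕ) [NeZero k] (hk : Even k) (hk4 : 4 ≤ k) (a : ZMod k) :
    Even (a + 1).val ↔ ¬ Even a.val := by
  have : Fact (1 < k) := ⟨by omega⟩
  have h1 := ZMod.val_add a 1
  rw [ZMod.val_one] at h1
  have h2 := ZMod.val_lt a
  by_cases h : a.val + 1 < k
  · rw [Nat.mod_eq_of_lt h] at h1
    rw [h1, Nat.even_add_one]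
  · have h3 : a.val + 1 = k := by omega
    rw [h3, Nat.mod_self] at h1
    rw [h1, ← Nat.even_add_one, h3]
    simp [hk]

theorem adj_ne (hm4 : 4 ≤ m) (hn4 : 4 ≤ n) {x y : Vtx m n} (h : HoneyAdj m n x y) : x ≠ y := by
  rintro rfl
  have h1 := one_ne m hm4
  have h2 := one_ne n hn4
  unfold HoneyAdj at h
  simp [h1, h2] at h

/-- Each vertex has exactly three neighbours. -/
theorem three_nbrs (hn : Even n) (hm4 : 4 ≤ m) (hn4 : 4 ≤ n) (x : Vtx m n) :
    ∃ a b c : Vtx m n, a ≠ b ∧ a ≠ c ∧ b ≠ c ∧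
      ∀ y, HoneyAdj m n x y ↔ (y = a ∨ y = b ∨ y = c) := by
  obtain ⟨i, j⟩ := x
  have h1 := one_ne m hm4
  have h1' := one_ne n hn4
  have h2 := two_ne m hm4
  have key : (i + 1 : ZMod m) ≠ i - 1 := by
    intro h
    apply h2
    linear_combination h
  have hp := val_parity n hn hn4 (j - 1)
  rw [sub_add_cancel] at hp
  by_cases he : Even (i.val + j.val)
  · refine ⟨(i + 1, j), (i - 1, j), (i, j + 1), by simp [key], by simp [h1], by simp [h1'], ?_⟩
    rintro ⟨k, l⟩
    simp only [HoneyAdj, Prod.mk.injEq]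
    constructor
    · rintro (⟨rfl, rfl | rfl⟩ | ⟨rfl, ⟨rfl, _⟩ | ⟨rfl, h⟩⟩)
      · simp
      · simp
      · simp
      · exfalso
        rw [add_sub_cancel_right] at hp
        rw [Nat.even_add] at he h
        tauto
    · rintro (⟨rfl, rfl⟩ | ⟨rfl, rfl⟩ | ⟨rfl, rfl⟩)
      · simp
      · simp
      · simp [he]
  · refine ⟨(i + 1, j), (i - 1, j), (i, j - 1), by simp [key], by simp [h1], by simp [h1], ?_⟩
    rintro ⟨k, l⟩
    simp only [HoneyAdj, Prod.mk.injEq]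
    constructor
    · rintro (⟨rfl, rfl | rfl⟩ | ⟨rfl, ⟨rfl, h⟩ | ⟨rfl, h⟩⟩)
      · simp
      · simp
      · exact absurd h he
      · simp
    · rintro (⟨rfl, rfl⟩ | ⟨rfl, rfl⟩ | ⟨rfl, rfl⟩)
      · simp
      · simp
      · right
        refine ⟨rfl, Or.inr ⟨by simp, ?_⟩⟩
        rw [Nat.even_add] at he ⊢
        tauto

theorem mem_edges {x y : Vtx m n} : s(x, y) ∈ honeyEdges m n ↔ HoneyAdj m n x y := by
  unfold honeyEdges
  simp only [Finset.mem_image, Finset.mem_filter, Finset.mem_univ, true_and]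
  constructor
  · rintro ⟨⟨a, b⟩, h, he⟩
    rcases Sym2.eq_iff.1 he with ⟨rfl, rfl⟩ | ⟨rfl, rfl⟩
    · exact h
    · exact adj_symm h
  · intro h
    exact ⟨(x, y), h, rfl⟩

/-- In a full-support Eulerian configuration all degrees equal two, and there is a unique missing
edge at each vertex. -/
theorem deg_two (hn : Even n) (hm4 : 4 ≤ m) (hn4 : 4 ≤ n) {A : Finset (Sym2 (Vtx m n))}
    {v : Vtx m n} (h : IsWormState m n A v v) (x : Vtx m n) (h0 : bdeg m n A x ≠ 0) :
    bdeg m n A x = 2 ∧ (∃ y, HoneyAdj m n x y ∧ s(x, y) ∉ A) ∧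
      ∀ y z, HoneyAdj m n x y → s(x, y) ∉ A → HoneyAdj m n x z → s(x, z) ∉ A → y = z := by
  obtain ⟨a, b, c, hab, hac, hbc, hy⟩ := three_nbrs hn hm4 hn4 x
  have hodd : ¬ Odd (bdeg m n A x) := by rw [h.2 x]; simp
  have hsub : (A.filter fun e => x ∈ e) ⊆ {s(x, a), s(x, b), s(x, c)} := by
    intro e he
    obtain ⟨heA, hxe⟩ := Finset.mem_filter.1 he
    obtain ⟨y, rfl⟩ := hxe
    have := (hy y).1 (mem_edges.1 (h.1 heA))
    rcases this with rfl | rfl | rfl <;> simp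
  have hinj : ∀ p q : Vtx m n, p ≠ q → s(x, p) ≠ s(x, q) := fun p q hpq h =>
    hpq (Sym2.congr_right.1 h)
  have hc3 : ({s(x, a), s(x, b), s(x, c)} : Finset (Sym2 (Vtx m n))).card = 3 := by
    rw [Finset.card_eq_three]
    exact ⟨_, _, _, hinj _ _ hab, hinj _ _ hac, hinj _ _ hbc, rfl⟩
  have hle : bdeg m n A x ≤ 3 := hc3 ▸ Finset.card_le_card hsub
  have h2 : bdeg m n A x = 2 := by
    rw [Nat.not_odd_iff_even] at hodd
    obtain ⟨k, hk⟩ := hodd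
    omega
  have h2' : (A.filter fun e => x ∈ e).card = 2 := h2
  refine ⟨h2, ?_, ?_⟩
  swap
  · intro y z hxy hyA hxz hzA
    by_contra hyz
    have hmem : ∀ w, HoneyAdj m n x w →
        s(x, w) ∈ ({s(x, a), s(x, b), s(x, c)} : Finset (Sym2 (Vtx m n))) := by
      intro w hw
      rcases (hy w).1 hw with rfl | rfl | rfl <;> simp
    have hs2 : (A.filter fun e => x ∈ e) ⊆
        (({s(x, a), s(x, b), s(x, c)} : Finset (Sym2 (Vtx m n))).erase s(x, y)).erase s(x, z) := by
      intro e he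
      have heA := (Finset.mem_filter.1 he).1
      refine Finset.mem_erase.2 ⟨?_, Finset.mem_erase.2 ⟨?_, hsub he⟩⟩
      · rintro rfl; exact hzA heA
      · rintro rfl; exact hyA heA
    have hcc := Finset.card_le_card hs2
    rw [Finset.card_erase_of_mem (Finset.mem_erase.2 ⟨hinj _ _ (Ne.symm hyz), hmem z hxz⟩),
      Finset.card_erase_of_mem (hmem y hxy), hc3, h2'] at hcc
    omega
  by_contra! hcon
  have hall : ({s(x, a), s(x, b), s(x, c)} : Finset (Sym2 (Vtx m n))) ⊆
      (A.filter fun e => x ∈ e) := by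
    intro e he
    simp only [Finset.mem_insert, Finset.mem_singleton] at he
    rw [Finset.mem_filter]
    rcases he with rfl | rfl | rfl
    · exact ⟨hcon a ((hy a).2 (by simp)), by simp⟩
    · exact ⟨hcon b ((hy b).2 (by simp)), by simp⟩
    · exact ⟨hcon c ((hy c).2 (by simp)), by simp⟩
  have := Finset.card_le_card hall
  rw [hc3] at this
  omega

theorem move_adj (hm4 : 4 ≤ m) (hn4 : 4 ≤ n)
    {A : Finset (Sym2 (Vtx m n))} (hA : ∀ x, IsWormState m n A x x)
    (hd : ∀ x, bdeg m n A x = 2) (hM : ∀ x, (∃ y, HoneyAdj m n x y ∧ s(x, y) ∉ A) ∧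
      ∀ y z, HoneyAdj m n x y → s(x, y) ∉ A → HoneyAdj m n x z → s(x, z) ∉ A → y = z)
    {v u : Vtx m n} (hvu : HoneyAdj m n v u) : RR (A, v, v) (A, u, u) := by
  have hne := adj_ne hm4 hn4 hvu
  by_cases hin : s(v, u) ∈ A
  · obtain ⟨v', hv, hvA⟩ := (hM v).1
    obtain ⟨u', hu, huA⟩ := (hM u).1
    have hv1 := adj_ne hm4 hn4 hv
    have hu1 := adj_ne hm4 hn4 hu
    have hv'u : v' ≠ u := by rintro rfl; exact hvA hin
    have hu'v : u' ≠ v := by rintro rfl; rw [Sym2.eq_swap] at huA; exact huA hin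
    have hne' : u' ≠ v' := by
      rintro rfl
      refine hne ((hM u').2 v u (adj_symm hv) ?_ (adj_symm hu) ?_)
      · rwa [Sym2.eq_swap]
      · rwa [Sym2.eq_swap]
    -- the three edges involved are distinct
    have e12 : s(v, v') ≠ s(v, u) := fun h => hv'u (Sym2.congr_right.1 h)
    have e13 : s(v, v') ≠ s(u, u') := by
      intro h; rcases Sym2.eq_iff.1 h with ⟨h, _⟩ | ⟨h, _⟩
      · exact hne h
      · exact hu'v h.symm
    have e23 : s(v, u) ≠ s(u, u') := by
      intro h; rcases Sym2.eq_iff.1 h with ⟨h, _⟩ | ⟨h, _⟩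
      · exact hne h
      · exact hu'v h.symm
    obtain ⟨S1, hS1⟩ : ∃ S, S = insert s(v, v') A := ⟨_, rfl⟩
    obtain ⟨S2, hS2⟩ : ∃ S, S = S1.erase s(v, u) := ⟨_, rfl⟩
    obtain ⟨S3, hS3⟩ : ∃ S, S = insert s(u, u') S2 := ⟨_, rfl⟩
    obtain ⟨S4, hS4⟩ : ∃ S, S = S3.erase s(v', v) := ⟨_, rfl⟩
    obtain ⟨S5, hS5⟩ : ∃ S, S = insert s(v, u) S4 := ⟨_, rfl⟩
    have sw : s(v', v) = s(v, v') := Sym2.eq_swap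
    have sw' : s(u', u) = s(u, u') := Sym2.eq_swap
    have m1 : s(v, u) ∈ S1 := by rw [hS1]; exact Finset.mem_insert_of_mem hin
    have m2 : s(u, u') ∉ S2 := by
      rw [hS2, hS1]; simp only [Finset.mem_erase, Finset.mem_insert]; tauto
    have m3 : s(v', v) ∈ S3 := by
      rw [hS3, hS2, hS1, sw]; simp only [Finset.mem_erase, Finset.mem_insert]; tauto
    have m4 : s(v, u) ∉ S4 := by
      rw [hS4, hS3, hS2, hS1, sw]; simp only [Finset.mem_erase, Finset.mem_insert]; tauto
    have m5 : s(u', u) ∈ S5 := by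
      rw [hS5, hS4, hS3, hS2, hS1, sw, sw']
      simp only [Finset.mem_erase, Finset.mem_insert]; tauto
    have m6 : S5.erase s(u', u) = A := by
      rw [hS5, hS4, hS3, hS2, hS1, sw, sw']
      ext e
      simp only [Finset.mem_erase, Finset.mem_insert]
      by_cases h1 : e = s(v, v')
      · subst h1; tauto
      by_cases h2 : e = s(v, u)
      · subst h2; tauto
      by_cases h3 : e = s(u, u')
      · subst h3; tauto
      tauto
    have d1 : ∀ x, bdeg m n S1 x = 2 + if x = v ∨ x = v' then 1 else 0 := by
      intro x; rw [hS1, bdeg_insert _ _ _ _ hvA, hd]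
    have d2 : ∀ x, bdeg m n S1 x = bdeg m n S2 x + if x = v ∨ x = u then 1 else 0 := by
      intro x; rw [hS2]; exact bdeg_erase _ _ _ _ m1
    have d3 : ∀ x, bdeg m n S3 x = bdeg m n S2 x + if x = u ∨ x = u' then 1 else 0 := by
      intro x; rw [hS3]; exact bdeg_insert _ _ _ _ m2
    have d4 : ∀ x, bdeg m n S3 x = bdeg m n S4 x + if x = v' ∨ x = v then 1 else 0 := by
      intro x; rw [hS4]; exact bdeg_erase _ _ _ _ m3
    have d5 : ∀ x, bdeg m n S5 x = bdeg m n S4 x + if x = v ∨ x = u then 1 else 0 := by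
      intro x; rw [hS5]; exact bdeg_insert _ _ _ _ m4
    have s1 : RR (A, v, v) (S1, v', v) := hS1 ▸ step_start (hA v) hv hv1 hvA
    obtain ⟨_, w1, _⟩ := id s1
    have s2 : RR (S1, v', v) (S2, v', u) := hS2 ▸ step_del_right w1 hv1.symm
      (by have := d1 v; simpa using this) hvu hne m1
    obtain ⟨_, w2, _⟩ := id s2
    have s3 : RR (S2, v', u) (S3, v', u') := hS3 ▸ step_add_right w2 hv'u
      (by have a1 := d1 u; have a2 := d2 u
          simp only [hne.symm, hv'u.symm, or_self, or_true, if_true, if_false] at a1 a2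
          show bdeg m n S2 u = 1
          omega) hu hu1 m2
    obtain ⟨_, w3, _⟩ := id s3
    have s4 : RR (S3, v', u') (S4, v, u') := hS4 ▸ step_del_left w3 hne'.symm
      (by have a1 := d1 v'; have a2 := d2 v'; have a3 := d3 v'
          simp only [hv1.symm, hv'u, hne'.symm, or_self, or_true, if_true, if_false] at a1 a2 a3
          show bdeg m n S3 v' = 3
          omega) (adj_symm hv) hv1.symm m3
    obtain ⟨_, w4, _⟩ := id s4
    have s5 : RR (S4, v, u') (S5, u, u') := hS5 ▸ step_add_left w4 hu'v.symm
      (by have a1 := d1 v; have a2 := d2 v; have a3 := d3 v; have a4 := d4 v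
          simp only [hne, hu'v.symm, or_self, or_true, true_or, if_true, if_false] at a1 a2 a3 a4
          show bdeg m n S4 v = 1
          omega) hvu hne m4
    obtain ⟨_, w5, _⟩ := id s5
    have s6 : RR (S5, u, u') (S5.erase s(u', u), u, u) := step_del_right w5 hu1
      (by have a1 := d1 u'; have a2 := d2 u'; have a3 := d3 u'; have a4 := d4 u'; have a5 := d5 u'
          simp only [hu'v, hne', hu1.symm, or_self, or_true, if_true, if_false] at a1 a2 a3 a4 a5
          show bdeg m n S5 u' = 3
          omega) (adj_symm hu) hu1.symm m5
    rw [m6] at s6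
    exact ((((s1.trans s2).trans s3).trans s4).trans s5).trans s6
  · have s1 := step_start (hA v) hvu hne hin
    obtain ⟨_, w1, _⟩ := id s1
    have s2 := step_del_right w1 hne.symm
      (by show bdeg m n (insert s(v, u) A) v = 3
          rw [bdeg_insert _ _ _ _ hin, hd]; simp) hvu hne (by simp)
    have := s1.trans s2
    simpa [Finset.erase_insert hin] using this

theorem all_reach (hm : Even m) (hm4 : 4 ≤ m) (hn4 : 4 ≤ n) (R : Vtx m n → Vtx m n → Prop)
    (hrefl : ∀ x, R x x) (htrans : ∀ x y z, R x y → R y z → R x z)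
    (hadj : ∀ x y, HoneyAdj m n x y → R x y) (x y : Vtx m n) : R x y := by
  have hh : ∀ i j, R (i, j) (i + 1, j) := fun i j => hadj _ _ (Or.inl ⟨rfl, Or.inl rfl⟩)
  have hh' : ∀ i j, R (i + 1, j) (i, j) := fun i j => hadj _ _ (Or.inl ⟨rfl, Or.inr rfl⟩)
  have hv : ∀ i j, R (i, j) (i, j + 1) := by
    intro i j
    by_cases he : Even (i.val + j.val)
    · exact hadj _ _ (Or.inr ⟨rfl, Or.inl ⟨rfl, he⟩⟩)
    · refine htrans _ _ _ (hh i j) (htrans _ _ _ ?_ (hh' i (j + 1)))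
      refine hadj _ _ (Or.inr ⟨rfl, Or.inl ⟨rfl, ?_⟩⟩)
      have := val_parity m hm hm4 i
      show Even ((i + 1).val + j.val)
      rw [Nat.even_add] at he ⊢
      tauto
  have hhk : ∀ (k : ℕ) i j, R (i, j) (i + k, j) := by
    intro k i j
    induction k with
    | zero => simpa using hrefl _
    | succ k ih =>
      have := htrans _ _ _ ih (hh _ _)
      rw [Nat.cast_succ, ← add_assoc]
      exact this
  have hvk : ∀ (k : ℕ) i j, R (i, j) (i, j + k) := by
    intro k i j
    induction k with
    | zero => simpa using hrefl _
    | succ k ih =>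
      have := htrans _ _ _ ih (hv _ _)
      rw [Nat.cast_succ, ← add_assoc]
      exact this
  obtain ⟨a, b⟩ := x
  obtain ⟨c, d⟩ := y
  have e1 := hhk (c - a).val a b
  have e2 := hvk (d - b).val c b
  rw [ZMod.natCast_zmod_val, add_sub_cancel] at e1 e2
  exact htrans _ _ _ e1 e2

end helpers

theorem eulerian_intercomm (m n : ℕ) [NeZero m] [NeZero n]
    (hm : Even m) (hn : Even n) (hm4 : 4 ≤ m) (hn4 : 4 ≤ n)
    (st : WormState m n) (v : Vtx m n) (hst : st.1.2 = (v, v))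
    (hR : FullSupport m n st) (u : Vtx m n) :
    ∃ t1 : WormState m n, t1.1 = (st.1.1, u, u) ∧ Comm m n st t1 := by
  obtain ⟨⟨A, p⟩, hw⟩ := st
  obtain rfl : p = (v, v) := hst
  have hA : ∀ x, IsWormState m n A x x := fun x => ⟨hw.1, fun y => by rw [hw.2 y]; simp⟩
  have hd := fun x => deg_two hn hm4 hn4 hw x (hR x)
  have key : ∀ x y : Vtx m n, RR (A, x, x) (A, y, y) :=
    all_reach hm hm4 hn4 (fun x y => RR (A, x, x) (A, y, y))
      (fun x => ⟨hA x, hA x, reaches_refl _⟩) (fun _ _ _ => RR.trans)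
      (fun _ _ h => move_adj hm4 hn4 hA (fun x => (hd x).1) (fun x => (hd x).2) h)
  obtain ⟨_, _, h1⟩ := key v u
  obtain ⟨_, _, h2⟩ := key u v
  exact ⟨⟨(A, u, u), hA u⟩, rfl, h1, h2⟩

end FPL
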